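/- Assume in addition that Φ(0, ζ) = 0 for all ζ in a neighborhood of 0 in ℝ^l. Then the germ of V at 0 is C^∞-smoothly orbitally equivalent to the germ at 0 of the vector field ξ̇ = n·ξ, η̇ = −m·η, ζ̇₁ = ξ^m η^n, ζ̇_i = 0 (i = 2, …, l). -/

import Mathlib

open Filter Topology

/-- Two vector fields `V`, `N` with marked points `x₀`, `y₀` are `C^∞`-smoothly orbitally
equivalent (as germs) if there are open neighborhoods `U ∋ x₀`, `U' ∋ y₀` with `U`
contained in the domain `Dom`, a `C^∞` diffeomorphism `Φ : U → U'` with `Φ x₀ = y₀`, and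
a `C^∞` nowhere-vanishing function `h : U → ℝ` with `DΦ(x)·V(x) = h(x)·N(Φ(x))` on `U`. -/
def OrbEquiv {E : Type*} [NormedAddCommGroup E] [NormedSpace ℝ E]
    (Dom : Set E) (V N : E → E) (x₀ y₀ : E) : Prop :=
  ∃ (U U' : Set E) (Φ Ψ : E → E) (h : E → ℝ),
    IsOpen U ∧ IsOpen U' ∧ x₀ ∈ U ∧ y₀ ∈ U' ∧ U ⊆ Dom ∧
    ContDiffOn ℝ (⊤ : ℕ∞) Φ U ∧ ContDiffOn ℝ (⊤ : ℕ∞) Ψ U' ∧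
    Φ x₀ = y₀ ∧ Set.MapsTo Φ U U' ∧ Set.MapsTo Ψ U' U ∧
    (∀ x ∈ U, Ψ (Φ x) = x) ∧ (∀ y ∈ U', Φ (Ψ y) = y) ∧
    ContDiffOn ℝ (⊤ : ℕ∞) h U ∧ (∀ x ∈ U, h x ≠ 0) ∧
    ∀ x ∈ U, fderiv ℝ Φ x (V x) = h x • N (Φ x)

/-!
The normal form has the first integrals `r = ρ` and `z = ζ - π ζ • e`, where `π` is a linear form
with `π e = 1`, and `t = π ζ` moves along its orbits with speed `ρ`. One looks for a conjugacy
`Θ = (ξ, η exp a, z + b)` with `(a, b)` a function of `(t, (r, z))`. Flatness gives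
`m μ₁ + n μ₂ = ρ χ` for the eigenvalue functions `μ₁, μ₂` of `V`, so the factor `ρ` cancels from
both nontrivial components of `h • DΘ(N) = V ∘ Θ`, where `h = μ₁ / n`. What remains is a smooth
differential equation for `(a, b)` in the time `t` with parameters `(r, z)`. With zero initial value
at `t = 0`, the derivative `DΘ(0)` is invertible as soon as `π (Ψ 0) ≠ 0`, and both conditions
on `π` can be met because `e` and `Ψ 0` are nonzero.

Smooth dependence of the solution on time and parameters follows from the implicit function theorem
for the rescaled Picard equation `v = r • ∫ f (p, v)` in `C([-1, 1], E)`, because composition with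
a smooth map is a smooth operation on continuous curves.
-/

open scoped ContDiff

section Superposition

variable {K : Type*} [TopologicalSpace K] [CompactSpace K]

section

variable {E F : Type*} [NormedAddCommGroup E] [NormedSpace ℝ E] [NormedAddCommGroup F]
  [NormedSpace ℝ F]

/-- The pointwise application `(A, u) ↦ (k ↦ A k (u k))`, as a continuous bilinear map. -/
noncomputable def pointwiseApply : C(K, E →L[ℝ] F) →L[ℝ] C(K, E) →L[ℝ] C(K, F) :=
  LinearMap.mkContinuous₂
    (LinearMap.mk₂ ℝ
      (fun (A : C(K, E →L[ℝ] F)) (u : C(K, E)) =>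
        (⟨fun k => A k (u k), A.continuous.clm_apply u.continuous⟩ : C(K, F)))
      (by intros; ext; simp) (by intros; ext; simp) (by intros; ext; simp) (by intros; ext; simp))
    1
    (fun A u => (ContinuousMap.norm_le _ (by positivity)).2 fun k => by
      rw [one_mul]
      exact (A k).le_of_opNorm_le_of_le (A.norm_coe_le_norm k) (u.norm_coe_le_norm k))

theorem norm_image_sub_sub_fderiv_le {f : E → F} (hf : Differentiable ℝ f) {x y : E} {c : ℝ}
    (hc : ∀ s ∈ Set.Icc (0 : ℝ) 1, ‖fderiv ℝ f (x + s • (y - x)) - fderiv ℝ f x‖ ≤ c) :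
    ‖f y - f x - fderiv ℝ f x (y - x)‖ ≤ c * ‖y - x‖ := by
  refine Convex.norm_image_sub_le_of_norm_fderiv_le' (𝕜 := ℝ) (fun z _ => hf z) ?_
    (convex_segment x y) (left_mem_segment ℝ x y) (right_mem_segment ℝ x y)
  rw [segment_eq_image']
  rintro _ ⟨s, hs, rfl⟩
  exact hc s hs

theorem hasFDerivAt_postcomp {f : E → F} (hf : ContDiff ℝ 1 f) (u : C(K, E)) :
    HasFDerivAt (fun v : C(K, E) => (⟨f, hf.continuous⟩ : C(E, F)).comp v)
      (pointwiseApply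
        ((⟨fderiv ℝ f, hf.continuous_fderiv one_ne_zero⟩ : C(E, E →L[ℝ] F)).comp u)) u := by
  set f' : C(E, E →L[ℝ] F) := ⟨fderiv ℝ f, hf.continuous_fderiv one_ne_zero⟩
  rw [hasFDerivAt_iff_isLittleO, Asymptotics.isLittleO_iff]
  intro c hc
  have hcont : Continuous fun v : C(K, E) => f'.comp v := f'.continuous_postcomp
  obtain ⟨δ, hδ, hball⟩ := Metric.eventually_nhds_iff.1
    (hcont.continuousAt.eventually (Metric.ball_mem_nhds (f'.comp u) hc))
  refine Metric.eventually_nhds_iff.2 ⟨δ, hδ, fun v hv => ?_⟩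
  refine (ContinuousMap.norm_le _ (by positivity)).2 fun k => ?_
  have hsegment : ∀ s ∈ Set.Icc (0 : ℝ) 1, ‖f' (u k + s • (v k - u k)) - f' (u k)‖ ≤ c := by
    intro s hs
    have hdist : dist (u + s • (v - u)) u < δ := by
      rw [dist_eq_norm] at hv ⊢
      rw [add_sub_cancel_left, norm_smul, Real.norm_of_nonneg hs.1]
      exact (mul_le_of_le_one_left (norm_nonneg _) hs.2).trans_lt hv
    have hk := (ContinuousMap.dist_apply_le_dist k).trans (hball hdist).le
    rwa [dist_eq_norm] at hk
  calc _ ≤ c * ‖v k - u k‖ :=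
        norm_image_sub_sub_fderiv_le (hf.differentiable one_ne_zero) hsegment
    _ ≤ c * ‖v - u‖ := by
        gcongr
        exact (v - u).norm_coe_le_norm k

end

universe u v

theorem contDiff_postcomp_nat {E : Type u} [NormedAddCommGroup E] [NormedSpace ℝ E] (r : ℕ) :
    ∀ {F : Type (max u v)} [NormedAddCommGroup F] [NormedSpace ℝ F] {f : E → F}
      (hf : ContDiff ℝ r f),
      ContDiff ℝ r (fun v : C(K, E) => (⟨f, hf.continuous⟩ : C(E, F)).comp v) := by
  induction r with
  | zero => exact fun _ => contDiff_zero.2 (ContinuousMap.continuous_postcomp _)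
  | succ r ih =>
    intro F _ _ f hf
    have hf₁ : ContDiff ℝ 1 f := hf.of_le (by norm_cast; omega)
    push_cast at hf ⊢
    exact contDiff_succ_iff_hasFDerivAt.2
      ⟨_, (ih (hf.fderiv_right le_rfl)).continuousLinearMap_comp pointwiseApply,
        hasFDerivAt_postcomp hf₁⟩

theorem contDiff_postcomp {E : Type u} {F : Type v} [NormedAddCommGroup E] [NormedSpace ℝ E]
    [NormedAddCommGroup F] [NormedSpace ℝ F] {r : ℕ∞} {f : E → F} (hf : ContDiff ℝ r f) :
    ContDiff ℝ r (fun v : C(K, E) => (⟨f, hf.continuous⟩ : C(E, F)).comp v) := by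
  let L : ULift.{u} F ≃L[ℝ] F := ContinuousLinearEquiv.ulift
  have hlift : ContDiff ℝ r (L.symm ∘ f) := L.symm.contDiff.comp hf
  refine contDiff_iff_forall_nat_le.2 fun k hk => ?_
  have hk : ContDiff ℝ k (L.symm ∘ f) := hlift.of_le (by exact_mod_cast hk)
  exact (contDiff_postcomp_nat.{u, v} k hk).continuousLinearMap_comp
    (L.toContinuousLinearMap.compLeftContinuous ℝ K)

end Superposition

section Curves

/-- Continuous curves on `[-1, 1]`. The interval is symmetric so that it is stable under
multiplication of the time by any `c ∈ [-1, 1]`, see `Curve.rescale`. -/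
abbrev Curve (E : Type*) [TopologicalSpace E] : Type _ := C(Set.Icc (-1 : ℝ) 1, E)

namespace Curve

variable {P E : Type*} [NormedAddCommGroup P] [NormedAddCommGroup E]

/-- The extension of a curve to `ℝ` that is constant on both sides of `[-1, 1]`. -/
noncomputable def extend (u : Curve E) : C(ℝ, E) :=
  u.IccExtend (by norm_num)

theorem extend_coe (u : Curve E) (t : Set.Icc (-1 : ℝ) 1) : u.extend t = u t :=
  Set.IccExtend_val _ _ t

theorem norm_extend_le (u : Curve E) (t : ℝ) : ‖u.extend t‖ ≤ ‖u‖ :=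
  u.norm_coe_le_norm _

/-- The curve `t ↦ u (c t)`, meaningful for `c ∈ [-1, 1]`; for other `c` the values of `u.extend`
are used. -/
noncomputable def rescale (c : ℝ) (u : Curve E) : Curve E :=
  ⟨fun t => u.extend (c * t), by fun_prop⟩

theorem norm_rescale_le (c : ℝ) (u : Curve E) : ‖u.rescale c‖ ≤ ‖u‖ :=
  (ContinuousMap.norm_le _ (norm_nonneg u)).2 fun _ => u.norm_extend_le _

theorem extend_rescale (c : ℝ) (u : Curve E) {t : ℝ} (ht : t ∈ Set.Icc (-1 : ℝ) 1) :
    (u.rescale c).extend t = u.extend (c * t) :=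
  (u.rescale c).extend_coe ⟨t, ht⟩

variable [NormedSpace ℝ P] [NormedSpace ℝ E]

/-- The primitive vanishing at `0`, as a continuous linear operator on curves. -/
noncomputable def primitive : Curve E →L[ℝ] Curve E :=
  LinearMap.mkContinuous
    { toFun := fun u => ⟨fun t => ∫ s in (0 : ℝ)..t, u.extend s,
        (intervalIntegral.continuous_primitive
          (fun _ _ => u.extend.continuous.intervalIntegrable _ _) 0).comp continuous_subtype_val⟩
      map_add' := fun u v => ContinuousMap.ext fun _ => intervalIntegral.integral_add
        (u.extend.continuous.intervalIntegrable _ _) (v.extend.continuous.intervalIntegrable _ _)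
      map_smul' := fun c _ => ContinuousMap.ext fun _ => intervalIntegral.integral_smul c _ }
    1
    (fun u => (ContinuousMap.norm_le _ (by positivity)).2 fun t => by
      refine (intervalIntegral.norm_integral_le_of_norm_le_const
        fun s _ => u.norm_extend_le s).trans ?_
      have ht : |(t : ℝ) - 0| ≤ 1 := by simpa using abs_le.2 t.2
      nlinarith [norm_nonneg u])

theorem extend_primitive (u : Curve E) {t : ℝ} (ht : t ∈ Set.Icc (-1 : ℝ) 1) :
    (primitive u).extend t = ∫ s in (0 : ℝ)..t, u.extend s :=
  (primitive u).extend_coe ⟨t, ht⟩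

theorem mul_mem_Icc_neg_one_one {a b : ℝ} (ha : a ∈ Set.Icc (-1 : ℝ) 1)
    (hb : b ∈ Set.Icc (-1 : ℝ) 1) : a * b ∈ Set.Icc (-1 : ℝ) 1 := by
  rw [Set.mem_Icc, ← abs_le] at *
  exact (abs_mul a b).trans_le (mul_le_one₀ ha (abs_nonneg b) hb)

theorem smul_primitive_rescale {c : ℝ} (hc : c ∈ Set.Icc (-1 : ℝ) 1) (u : Curve E) :
    c • primitive (u.rescale c) = (primitive u).rescale c := by
  ext t
  calc c • ∫ s in (0 : ℝ)..t, (u.rescale c).extend s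
      = c • ∫ s in (0 : ℝ)..t, u.extend (c * s) := by
        congr 1
        exact intervalIntegral.integral_congr fun s hs =>
          extend_rescale c u (Set.uIcc_subset_Icc (by norm_num) t.2 hs)
    _ = ∫ s in (0 : ℝ)..c * t, u.extend s := by
        rw [intervalIntegral.smul_integral_comp_mul_left, mul_zero]
    _ = (primitive u).extend (c * t) :=
        (extend_primitive u (mul_mem_Icc_neg_one_one hc t.2)).symm

/-- The curve `t ↦ (p, v t)`, as a continuous linear function of `(p, v)`. -/
noncomputable def withParam : P × Curve E →L[ℝ] Curve (P × E) where
  toFun w := ⟨fun t => (w.1, w.2 t), by fun_prop⟩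
  map_add' _ _ := rfl
  map_smul' _ _ := rfl
  cont := ContinuousMap.continuous_of_continuous_uncurry _ (by
    simp only [Function.uncurry_def, ContinuousMap.coe_mk]; fun_prop)

/-- The Picard operator of `v' = f (p, v)`, `v 0 = 0`, as a function of the parameter `p` and
the curve `v`. -/
noncomputable def picard (f : C(P × E, E)) (w : P × Curve E) : Curve E :=
  primitive (f.comp (withParam w))

theorem contDiff_picard {f : C(P × E, E)} (hf : ContDiff ℝ ∞ f) : ContDiff ℝ ∞ (picard f) :=
  ((contDiff_postcomp hf).comp withParam.contDiff).continuousLinearMap_comp primitive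

theorem smul_picard_rescale {c : ℝ} (hc : c ∈ Set.Icc (-1 : ℝ) 1) (f : C(P × E, E)) (p : P)
    (v : Curve E) : c • picard f (p, v.rescale c) = (picard f (p, v)).rescale c :=
  smul_primitive_rescale hc (f.comp (withParam (p, v)))

theorem hasDerivAt_extend_of_eq_smul_picard [CompleteSpace E] {f : C(P × E, E)} {p : P}
    {v : Curve E} {r t : ℝ} (hv : v = r • picard f (p, v)) (ht : |t| < r) :
    HasDerivAt (fun t => v.extend (t / r)) (f (p, v.extend (t / r))) t := by
  have hr : 0 < r := (abs_nonneg t).trans_lt ht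
  let w : Curve E := f.comp (withParam (p, v))
  have hdiv : ∀ s : ℝ, |s| < r → s / r ∈ Set.Icc (-1 : ℝ) 1 := fun s hs => by
    rw [Set.mem_Icc, ← abs_le, abs_div, abs_of_pos hr]
    exact (div_le_one hr).2 hs.le
  have hintegral : ∀ᶠ s in 𝓝 t, v.extend (s / r) = r • ∫ x in (0 : ℝ)..s / r, w.extend x := by
    filter_upwards [continuous_abs.continuousAt.eventually_lt_const ht] with s hs
    rw [← extend_primitive w (hdiv s hs)]
    exact congrArg (fun u : Curve E => u.extend (s / r)) hv
  have hderiv : HasDerivAt (fun s => r • ∫ x in (0 : ℝ)..s / r, w.extend x)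
      (r • (1 / r) • w.extend (t / r)) t :=
    ((w.extend.continuous.integral_hasStrictDerivAt 0 (t / r)).hasDerivAt.scomp t
      ((hasDerivAt_id t).div_const r)).const_smul r
  refine (hderiv.congr_of_eventuallyEq hintegral).congr_deriv ?_
  rw [smul_smul, mul_one_div_cancel hr.ne', one_smul]
  rfl

end Curve

end Curves

section InverseFunction

theorem exists_openPartialHomeomorph_contDiffOn {𝕜 : Type*} [RCLike 𝕜] {E F : Type*}
    [NormedAddCommGroup E] [NormedSpace 𝕜 E] [CompleteSpace E] [NormedAddCommGroup F]
    [NormedSpace 𝕜 F] {r : WithTop ℕ∞} (hr : r ≠ 0) {f : E → F} {a : E} {s : Set E}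
    (hs : s ∈ 𝓝 a) (hf : ContDiffOn 𝕜 r f s) (hf' : (fderiv 𝕜 f a).IsInvertible) :
    ∃ e : OpenPartialHomeomorph E F, ⇑e = f ∧ a ∈ e.source ∧ e.source ⊆ s ∧
      ContDiffOn 𝕜 r e.symm e.target := by
  have hfa : ContDiffAt 𝕜 r f a := hf.contDiffAt hs
  obtain ⟨L, hL⟩ := hf'
  have hfL : HasFDerivAt f (L : E →L[𝕜] F) a := by
    rw [hL]
    exact (hfa.differentiableAt hr).hasFDerivAt
  have hinv : ∀ᶠ x in 𝓝 a, (fderiv 𝕜 f x).IsInvertible :=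
    (hfa.continuousAt_fderiv hr).eventually (ContinuousLinearEquiv.isOpen.mem_nhds ⟨L, hL⟩)
  obtain ⟨W, hW, hWo, haW⟩ := eventually_nhds_iff.1 ((eventually_mem_nhds_iff.2 hs).and hinv)
  let e := (hfa.toOpenPartialHomeomorph f hfL hr).restrOpen W hWo
  have heW : e.source ⊆ W := fun x hx => hx.2
  refine ⟨e, rfl, ⟨hfa.mem_toOpenPartialHomeomorph_source hfL hr, haW⟩,
    fun x hx => mem_of_mem_nhds (hW x (heW hx)).1, fun y hy => ?_⟩
  obtain ⟨hsx, ⟨A, hA⟩⟩ := hW _ (heW (e.map_target hy))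
  have hfx : ContDiffAt 𝕜 r f (e.symm y) := hf.contDiffAt hsx
  refine (e.contDiffAt_symm (f₀' := A) hy ?_ hfx).contDiffWithinAt
  rw [hA]
  exact (hfx.differentiableAt hr).hasFDerivAt

section

variable {𝕜 : Type*} [RCLike 𝕜] {A B F : Type*} [NormedAddCommGroup A] [NormedSpace 𝕜 A]
  [NormedAddCommGroup B] [NormedSpace 𝕜 B] [NormedAddCommGroup F] [NormedSpace 𝕜 F]

theorem isInvertible_fderiv_fst_prodMk {G : A × B → F} {x : A × B}
    (hG : DifferentiableAt 𝕜 G x) (hG' : (fderiv 𝕜 G x ∘L .inr 𝕜 A B).IsInvertible) :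
    (fderiv 𝕜 (fun v => (v.1, G v)) x).IsInvertible := by
  obtain ⟨L, hL⟩ := hG'
  refine ⟨(ContinuousLinearEquiv.refl 𝕜 A).skewProd L (fderiv 𝕜 G x ∘L .inl 𝕜 A B), ?_⟩
  rw [(hasFDerivAt_fst.prodMk hG.hasFDerivAt).fderiv]
  refine ContinuousLinearMap.ext fun v => Prod.ext rfl ?_
  have hLv : L v.2 = fderiv 𝕜 G x (0, v.2) := DFunLike.congr_fun hL v.2
  simp [hLv, ← map_add]

theorem exists_implicitFunction_contDiffAt [CompleteSpace A] [CompleteSpace B]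
    {r : WithTop ℕ∞} (hr : r ≠ 0) {G : A × B → F} {a : A} {b : B} (hG : ContDiff 𝕜 r G)
    (hG₀ : G (a, b) = 0)
    (hG' : (fderiv 𝕜 G (a, b) ∘L .inr 𝕜 A B).IsInvertible) :
    ∃ ψ : A → B, ψ a = b ∧ (∀ᶠ p in 𝓝 a, ContDiffAt 𝕜 r ψ p) ∧
      (∀ᶠ p in 𝓝 a, G (p, ψ p) = 0) ∧ ∀ᶠ v in 𝓝 (a, b), G v = 0 → ψ v.1 = v.2 := by
  let H : A × B → A × F := fun v => (v.1, G v)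
  have hH : ContDiff 𝕜 r H := contDiff_fst.prodMk hG
  have hH' : (fderiv 𝕜 H (a, b)).IsInvertible :=
    isInvertible_fderiv_fst_prodMk (hG.differentiable hr (a, b)) hG'
  obtain ⟨e, heH, hab, -, hsymm⟩ :=
    exists_openPartialHomeomorph_contDiffOn hr univ_mem hH.contDiffOn hH'
  have hHab : H (a, b) = (a, 0) := Prod.ext rfl hG₀
  have htarget : ∀ᶠ p in 𝓝 a, (p, (0 : F)) ∈ e.target := by
    refine (Continuous.prodMk_left (0 : F)).continuousAt.eventually (e.open_target.mem_nhds ?_)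
    have hmem : e (a, b) ∈ e.target := e.map_source hab
    rwa [heH, hHab] at hmem
  have hleft : ∀ v ∈ e.source, G v = 0 → e.symm (v.1, 0) = v := by
    intro v hv hGv
    have hev : e v = (v.1, 0) := by rw [heH, ← hGv]
    rw [← hev, e.left_inv hv]
  refine ⟨fun p => (e.symm (p, 0)).2, congrArg Prod.snd (hleft _ hab hG₀), ?_, ?_, ?_⟩
  · filter_upwards [htarget] with p hp
    have hcomp := (hsymm.contDiffAt (e.open_target.mem_nhds hp)).comp p
      (contDiff_prodMk_left (0 : F)).contDiffAt
    exact contDiffAt_snd.comp p hcomp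
  · filter_upwards [htarget] with p hp
    have hright : H (e.symm (p, 0)) = (p, 0) := heH ▸ e.right_inv hp
    obtain ⟨hfst, hsnd⟩ := Prod.ext_iff.1 hright
    rwa [← show e.symm (p, 0) = (p, (e.symm (p, 0)).2) from Prod.ext hfst rfl]
  · filter_upwards [e.open_source.mem_nhds hab] with v hv hGv
    rw [hleft v hv hGv]

end

end InverseFunction

section ParametricODE

variable {P E : Type*} [NormedAddCommGroup P] [NormedSpace ℝ P] [NormedAddCommGroup E]
  [NormedSpace ℝ E]

open Curve

theorem eventually_eq_rescale_of_eq_smul_picard {f : C(P × E, E)} {ψ : ℝ × P → Curve E}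
    (hψ : ContinuousAt ψ 0) (hfix : ∀ᶠ q in 𝓝 0, ψ q = q.1 • picard f (q.2, ψ q))
    (hunique : ∀ᶠ w in 𝓝 (0 : (ℝ × P) × Curve E),
      w.2 = w.1.1 • picard f (w.1.2, w.2) → ψ w.1 = w.2) :
    ∀ᶠ q in 𝓝 0, ∀ c ∈ Set.Icc (-1 : ℝ) 1, ψ (c * q.1, q.2) = (ψ q).rescale c := by
  have hψ₀ : ψ 0 = 0 := hfix.self_of_nhds.trans (zero_smul ℝ _)
  obtain ⟨δ, hδ, hball⟩ := Metric.eventually_nhds_iff.1 hunique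
  have hψball : ∀ᶠ q in 𝓝 0, ψ q ∈ Metric.ball 0 δ :=
    hψ.eventually (by rw [hψ₀]; exact Metric.ball_mem_nhds 0 hδ)
  filter_upwards [hfix, hψball, Metric.ball_mem_nhds 0 hδ] with q hq hψq hqδ c hc
  refine hball (y := ((c * q.1, q.2), (ψ q).rescale c)) ?_ ?_
  · rw [mem_ball_zero_iff] at hψq
    rw [mem_ball_zero_iff, Prod.norm_def, max_lt_iff] at hqδ
    rw [dist_zero_right, Prod.norm_def, max_lt_iff, Prod.norm_def, max_lt_iff, norm_mul]
    exact ⟨⟨(mul_le_of_le_one_left (norm_nonneg _) (abs_le.2 hc)).trans_lt hqδ.1, hqδ.2⟩,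
      (norm_rescale_le c (ψ q)).trans_lt hψq⟩
  · calc (ψ q).rescale c = (q.1 • picard f (q.2, ψ q)).rescale c := congrArg (rescale c) hq
      _ = q.1 • c • picard f (q.2, (ψ q).rescale c) := by
        rw [smul_picard_rescale hc]
        rfl
      _ = (c * q.1) • picard f (q.2, (ψ q).rescale c) := by rw [smul_smul, mul_comm]

variable [CompleteSpace P] [CompleteSpace E]

theorem exists_eq_smul_picard {f : C(P × E, E)} (hf : ContDiff ℝ ∞ f) :
    ∃ ψ : ℝ × P → Curve E, (∀ᶠ q in 𝓝 0, ContDiffAt ℝ ∞ ψ q) ∧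
      (∀ᶠ q in 𝓝 0, ψ q = q.1 • picard f (q.2, ψ q)) ∧
      ∀ᶠ w in 𝓝 (0 : (ℝ × P) × Curve E),
        w.2 = w.1.1 • picard f (w.1.2, w.2) → ψ w.1 = w.2 := by
  let G : (ℝ × P) × Curve E → Curve E := fun w => w.2 - w.1.1 • picard f (w.1.2, w.2)
  have hG : ContDiff ℝ ∞ G :=
    contDiff_snd.sub (contDiff_fst.fst.smul
      ((contDiff_picard hf).comp (contDiff_fst.snd.prodMk contDiff_snd)))
  have hG₀ : (fun v => G (0, v)) = id := funext fun v => by simp [G]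
  have hinv : (fderiv ℝ G (0, 0) ∘L .inr ℝ (ℝ × P) (Curve E)).IsInvertible := by
    have hderiv : HasFDerivAt (fun v => G (0, v))
        (fderiv ℝ G (0, 0) ∘L .inr ℝ (ℝ × P) (Curve E)) 0 :=
      (hG.differentiable (by simp) (0, 0)).hasFDerivAt.comp 0 (hasFDerivAt_prodMk_right 0 0)
    rw [hG₀] at hderiv
    rw [hderiv.unique (hasFDerivAt_id 0)]
    exact ⟨ContinuousLinearEquiv.refl ℝ _, rfl⟩
  obtain ⟨ψ, -, hψ, hzero, hunique⟩ :=
    exists_implicitFunction_contDiffAt (by simp) hG (congrFun hG₀ 0) hinv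
  exact ⟨ψ, hψ, hzero.mono fun _ => sub_eq_zero.1,
    hunique.mono fun _ hw hfix => hw (sub_eq_zero.2 hfix)⟩

/-- `φ (t, p)` solves `v' = f (p, v)`, `v 0 = 0` for small times `t` and small parameters `p`, and
is smooth in `(t, p)` near the origin. -/
structure IsSmoothLocalSolution (f : P × E → E) (φ : ℝ × P → E) : Prop where
  contDiffAt : ∀ᶠ q in 𝓝 0, ContDiffAt ℝ ∞ φ q
  apply_zero : ∀ᶠ p in 𝓝 0, φ (0, p) = 0
  hasDerivAt : ∀ᶠ q in 𝓝 0, HasDerivAt (fun t => φ (t, q.2)) (f (q.2, φ q)) q.1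

theorem exists_isSmoothLocalSolution_of_contDiff {f : P × E → E} (hf : ContDiff ℝ ∞ f) :
    ∃ φ, IsSmoothLocalSolution f φ := by
  obtain ⟨ψ, hψ, hfix, hunique⟩ := exists_eq_smul_picard (f := ⟨f, hf.continuous⟩) hf
  have hscale := eventually_eq_rescale_of_eq_smul_picard hψ.self_of_nhds.continuousAt hfix hunique
  refine ⟨fun q => (ψ q).extend 1, ⟨?_, ?_, ?_⟩⟩
  · filter_upwards [hψ] with q hq
    exact (ContinuousMap.evalCLM ℝ _).contDiff.contDiffAt.comp q hq
  · have hzero : Tendsto (fun p : P => ((0 : ℝ), p)) (𝓝 0) (𝓝 0) :=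
      (Continuous.prodMk_right (0 : ℝ)).tendsto 0
    filter_upwards [hzero.eventually hfix] with p hp
    rw [hp, zero_smul]
    rfl
  · obtain ⟨r, hgood, hr⟩ : ∃ r : ℝ, (∀ᶠ p in 𝓝 (0 : P), _) ∧ 0 < r :=
      (((hfix.and hscale).curry_nhds.filter_mono nhdsWithin_le_nhds).and
        (self_mem_nhdsWithin (s := Set.Ioi 0))).exists
    have hsnd : Tendsto Prod.snd (𝓝 (0 : ℝ × P)) (𝓝 0) := continuous_snd.tendsto 0
    have hfst : ∀ᶠ q in 𝓝 (0 : ℝ × P), |q.1| < r :=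
      continuous_fst.abs.continuousAt.eventually_lt_const (by simpa using hr)
    filter_upwards [hsnd.eventually hgood, hfst] with ⟨t, p⟩ ⟨hfixp, hscalep⟩ ht
    have hφ : ∀ s, |s| < r → (ψ (s, p)).extend 1 = (ψ (r, p)).extend (s / r) := by
      intro s hs
      have hsr : s / r ∈ Set.Icc (-1 : ℝ) 1 := by
        rw [Set.mem_Icc, ← abs_le, abs_div, abs_of_pos hr]
        exact (div_le_one hr).2 hs.le
      have hψs := hscalep (s / r) hsr
      rw [div_mul_cancel₀ s hr.ne'] at hψs
      rw [hψs, extend_rescale _ _ (by norm_num), mul_one]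
    have hderiv := hasDerivAt_extend_of_eq_smul_picard hfixp ht
    rw [← hφ t ht] at hderiv
    refine hderiv.congr_of_eventuallyEq ?_
    filter_upwards [continuous_abs.continuousAt.eventually_lt_const ht] with s hs using hφ s hs

end ParametricODE

section LocalSolution

theorem eventually_contDiffAt_of_contDiffOn {F G : Type*} [NormedAddCommGroup F] [NormedSpace ℝ F]
    [NormedAddCommGroup G] [NormedSpace ℝ G] {r : WithTop ℕ∞} {g : F → G} {s : Set F} {x : F}
    (hg : ContDiffOn ℝ r g s) (hs : s ∈ 𝓝 x) : ∀ᶠ y in 𝓝 x, ContDiffAt ℝ r g y :=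
  (eventually_mem_nhds_iff.2 hs).mono fun _ hy => hg.contDiffAt hy

theorem exists_contDiff_eventuallyEq {E F : Type*} [NormedAddCommGroup E] [NormedSpace ℝ E]
    [HasContDiffBump E] [NormedAddCommGroup F] [NormedSpace ℝ F] {r : ℕ∞} {f : E → F} {x : E}
    (hf : ∀ᶠ y in 𝓝 x, ContDiffAt ℝ r f y) : ∃ g, ContDiff ℝ r g ∧ g =ᶠ[𝓝 x] f := by
  obtain ⟨δ, hδ, hball⟩ := Metric.eventually_nhds_iff_ball.1 hf
  let b : ContDiffBump x := ⟨δ / 4, δ / 2, by linarith, by linarith⟩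
  refine ⟨fun y => b y • f y, contDiff_iff_contDiffAt.2 fun y => ?_, ?_⟩
  · by_cases hy : y ∈ Metric.ball x δ
    · exact b.contDiffAt.smul (hball y hy)
    · have hmem : y ∉ tsupport b := by
        rw [b.tsupport_eq]
        exact fun h => hy (Metric.closedBall_subset_ball (half_lt_self hδ) h)
      refine contDiffAt_const (c := 0) |>.congr_of_eventuallyEq ?_
      filter_upwards [notMem_tsupport_iff_eventuallyEq.1 hmem] with z hz
      rw [hz, Pi.zero_apply, zero_smul]
  · filter_upwards [b.eventuallyEq_one] with y hy
    rw [hy, Pi.one_apply, one_smul]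

variable {P E : Type*} [NormedAddCommGroup P] [NormedSpace ℝ P] [NormedAddCommGroup E]
  [NormedSpace ℝ E] {f : P × E → E} {φ : ℝ × P → E}

namespace IsSmoothLocalSolution

theorem map_zero (hφ : IsSmoothLocalSolution f φ) : φ 0 = 0 :=
  hφ.apply_zero.self_of_nhds

theorem tendsto (hφ : IsSmoothLocalSolution f φ) : Tendsto φ (𝓝 0) (𝓝 0) := by
  simpa only [hφ.map_zero] using hφ.contDiffAt.self_of_nhds.continuousAt.tendsto

theorem congr_of_eventuallyEq {g : P × E → E} (hφ : IsSmoothLocalSolution f φ)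
    (hfg : f =ᶠ[𝓝 0] g) : IsSmoothLocalSolution g φ where
  contDiffAt := hφ.contDiffAt
  apply_zero := hφ.apply_zero
  hasDerivAt := by
    have hgraph : Tendsto (fun q : ℝ × P => (q.2, φ q)) (𝓝 0) (𝓝 0) :=
      (continuous_snd.tendsto (0 : ℝ × P)).prodMk_nhds hφ.tendsto
    filter_upwards [hφ.hasDerivAt, hgraph.eventually hfg] with q hq hqfg
    rwa [← hqfg]

theorem eventually_fderiv_apply (hφ : IsSmoothLocalSolution f φ) :
    ∀ᶠ q in 𝓝 0, ∀ s, fderiv ℝ φ q (s, 0) = s • f (q.2, φ q) := by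
  filter_upwards [hφ.contDiffAt, hφ.hasDerivAt] with q hq hderiv s
  have hpartial : HasDerivAt (fun t => φ (t, q.2)) (fderiv ℝ φ q (1, 0)) q.1 :=
    (hq.differentiableAt (by simp)).hasFDerivAt.comp_hasDerivAt q.1
      ((hasDerivAt_id q.1).prodMk (hasDerivAt_const q.1 q.2))
  rw [hderiv.unique hpartial, ← map_smul, Prod.smul_mk, smul_zero, smul_eq_mul, mul_one]

theorem fderiv_zero_apply (hφ : IsSmoothLocalSolution f φ) (q : ℝ × P) :
    fderiv ℝ φ 0 q = q.1 • f 0 := by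
  have hparam : fderiv ℝ φ 0 (0, q.2) = 0 := by
    have hpartial : HasFDerivAt (fun p => φ (0, p)) (fderiv ℝ φ 0 ∘L .inr ℝ ℝ P) 0 :=
      (hφ.contDiffAt.self_of_nhds.differentiableAt (by simp)).hasFDerivAt.comp 0
        (hasFDerivAt_prodMk_right 0 0)
    have hzero : HasFDerivAt (fun p => φ (0, p)) (0 : P →L[ℝ] E) 0 :=
      (hasFDerivAt_const 0 0).congr_of_eventuallyEq hφ.apply_zero
    exact DFunLike.congr_fun (hpartial.unique hzero) q.2
  have htime := hφ.eventually_fderiv_apply.self_of_nhds q.1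
  rw [hφ.map_zero] at htime
  calc fderiv ℝ φ 0 q = fderiv ℝ φ 0 (q.1, 0) + fderiv ℝ φ 0 (0, q.2) := by
        rw [← map_add, Prod.fst_add_snd]
    _ = q.1 • f 0 := by rw [htime, hparam, add_zero]; rfl

end IsSmoothLocalSolution

theorem exists_isSmoothLocalSolution [FiniteDimensional ℝ P] [FiniteDimensional ℝ E]
    (hf : ∀ᶠ x in 𝓝 0, ContDiffAt ℝ ∞ f x) : ∃ φ, IsSmoothLocalSolution f φ := by
  have : CompleteSpace P := FiniteDimensional.complete ℝ P
  have : CompleteSpace E := FiniteDimensional.complete ℝ E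
  obtain ⟨g, hg, hgf⟩ := exists_contDiff_eventuallyEq hf
  obtain ⟨φ, hφ⟩ := exists_isSmoothLocalSolution_of_contDiff hg
  exact ⟨φ, hφ.congr_of_eventuallyEq hgf⟩

end LocalSolution

section Hadamard

variable {F G : Type*} [NormedAddCommGroup F] [NormedSpace ℝ F] [NormedAddCommGroup G]
  [NormedSpace ℝ G]

/-- The curve `s ↦ (s x, z)`, as a continuous linear function of `(x, z)`. -/
noncomputable def segmentCurve : ℝ × F →L[ℝ] Curve (ℝ × F) where
  toFun q := ⟨fun s => (s * q.1, q.2), by fun_prop⟩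
  map_add' _ _ := by ext <;> simp [mul_add]
  map_smul' _ _ := by ext <;> simp [mul_left_comm]
  cont := ContinuousMap.continuous_of_continuous_uncurry _ (by
    simp only [Function.uncurry_def, ContinuousMap.coe_mk]; fun_prop)

theorem exists_contDiff_eq_add_smul [CompleteSpace G] {f : ℝ × F → G} (hf : ContDiff ℝ ∞ f) :
    ∃ χ : ℝ × F → G, ContDiff ℝ ∞ χ ∧ ∀ x z, f (x, z) = f (0, z) + x • χ (x, z) := by
  let g : C(ℝ × F, G) := ⟨fun q => fderiv ℝ f q (1, 0), by fun_prop (disch := simp)⟩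
  have hg : ContDiff ℝ ∞ g := (hf.fderiv_right (by simp)).clm_apply contDiff_const
  refine ⟨fun q => (Curve.primitive (g.comp (segmentCurve q))).extend 1, ?_, fun x z => ?_⟩
  · exact (ContinuousMap.evalCLM ℝ _).contDiff.comp
      (((contDiff_postcomp hg).comp segmentCurve.contDiff).continuousLinearMap_comp
        Curve.primitive)
  · have hderiv (s : ℝ) : HasDerivAt (fun s : ℝ => f (s * x, z)) (x • g (s * x, z)) s := by
      have hline : HasDerivAt (fun s : ℝ => (s * x, z)) (x • ((1 : ℝ), (0 : F))) s := by
        simpa using ((hasDerivAt_id s).mul_const x).prodMk (hasDerivAt_const s z)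
      exact ((hf.differentiable (by simp) (s * x, z)).hasFDerivAt.comp_hasDerivAt s
        hline).congr_deriv (map_smul _ _ _)
    have hintegral : ∫ s in (0 : ℝ)..1, x • g (s * x, z) = f (x, z) - f (0, z) := by
      rw [intervalIntegral.integral_eq_sub_of_hasDerivAt (fun s _ => hderiv s)
        (Continuous.intervalIntegrable (by fun_prop) _ _), one_mul, zero_mul]
    have hcurve : ∫ s in (0 : ℝ)..1, g (s * x, z) =
        (Curve.primitive (g.comp (segmentCurve (x, z)))).extend 1 := by
      rw [Curve.extend_primitive _ (by norm_num)]
      refine intervalIntegral.integral_congr fun s hs => ?_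
      exact (Curve.extend_coe (g.comp (segmentCurve (x, z)))
        ⟨s, Set.uIcc_subset_Icc (by norm_num) (by norm_num) hs⟩).symm
    beta_reduce
    rw [← hcurve, ← intervalIntegral.integral_smul, hintegral, add_sub_cancel]

theorem exists_contDiff_eventually_eq_smul [FiniteDimensional ℝ F] [CompleteSpace G]
    {f : ℝ × F → G} (hf : ∀ᶠ q in 𝓝 0, ContDiffAt ℝ ∞ f q) (hf₀ : ∀ᶠ z in 𝓝 0, f (0, z) = 0) :
    ∃ χ : ℝ × F → G, ContDiff ℝ ∞ χ ∧ ∀ᶠ q in 𝓝 0, f q = q.1 • χ q := by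
  obtain ⟨g, hg, hgf⟩ := exists_contDiff_eventuallyEq hf
  obtain ⟨χ, hχ, hgχ⟩ := exists_contDiff_eq_add_smul hg
  have hproj : Tendsto (fun q : ℝ × F => ((0 : ℝ), q.2)) (𝓝 0) (𝓝 0) :=
    (continuous_const.prodMk continuous_snd).tendsto 0
  have hsnd : Tendsto Prod.snd (𝓝 (0 : ℝ × F)) (𝓝 0) := continuous_snd.tendsto 0
  refine ⟨χ, hχ, ?_⟩
  filter_upwards [hgf, hproj.eventually hgf, hsnd.eventually hf₀] with q hq hq₀ hf₀q
  rw [← hq, hgχ q.1 q.2, hq₀, hf₀q, zero_add]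

end Hadamard

section OrbitalEquivalence

variable {E : Type*} [NormedAddCommGroup E] [NormedSpace ℝ E]

theorem fderiv_symm_fderiv_apply {F : Type*} [NormedAddCommGroup F] [NormedSpace ℝ F]
    (e : OpenPartialHomeomorph E F) {y : E} (hy : y ∈ e.source) (he : DifferentiableAt ℝ e y)
    (he' : DifferentiableAt ℝ e.symm (e y)) (v : E) :
    fderiv ℝ e.symm (e y) (fderiv ℝ e y v) = v := by
  have hcomp : HasFDerivAt (e.symm ∘ e) (fderiv ℝ e.symm (e y) ∘L fderiv ℝ e y) y :=
    he'.hasFDerivAt.comp y he.hasFDerivAt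
  have hid : HasFDerivAt (e.symm ∘ e) (.id ℝ E) y :=
    (hasFDerivAt_id y).congr_of_eventuallyEq (e.eventually_left_inverse hy)
  exact DFunLike.congr_fun (hcomp.unique hid) v

theorem OrbEquiv.of_smul_fderiv_eq [CompleteSpace E] {Dom : Set E} {V N Θ : E → E} {h : E → ℝ}
    {x₀ y₀ : E} (hDom : Dom ∈ 𝓝 x₀) (hΘ₀ : Θ y₀ = x₀) (hΘ : ∀ᶠ y in 𝓝 y₀, ContDiffAt ℝ ∞ Θ y)
    (hΘ' : (fderiv ℝ Θ y₀).IsInvertible) (hh : ∀ᶠ x in 𝓝 x₀, ContDiffAt ℝ ∞ h x)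
    (hh₀ : h x₀ ≠ 0) (hconj : ∀ᶠ y in 𝓝 y₀, h (Θ y) • fderiv ℝ Θ y (N y) = V (Θ y)) :
    OrbEquiv Dom V N x₀ y₀ := by
  have hΘcont : Tendsto Θ (𝓝 y₀) (𝓝 x₀) := hΘ₀ ▸ hΘ.self_of_nhds.continuousAt.tendsto
  have hh_ne : ∀ᶠ x in 𝓝 x₀, h x ≠ 0 := hh.self_of_nhds.continuousAt.eventually_ne hh₀
  have hs := (hΘ.and hconj).and (hΘcont.eventually (hh.and (hh_ne.and hDom)))
  obtain ⟨e, heΘ, hy₀, hes, hsymm⟩ := exists_openPartialHomeomorph_contDiffOn (r := ∞)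
    (by simp) hs (fun y hy => hy.1.1.contDiffWithinAt) hΘ'
  have htarget {p : E → Prop} (hp : ∀ y ∈ e.source, p (e y)) : ∀ x ∈ e.target, p x :=
    fun x hx => e.right_inv hx ▸ hp _ (e.map_target hx)
  rw [← heΘ] at hΘ₀ hes
  refine ⟨e.target, e.source, e.symm, e, h, e.open_target, e.open_source,
    hΘ₀ ▸ e.map_source hy₀, hy₀, htarget fun y hy => (hes hy).2.2.2, hsymm,
    fun y hy => (hes hy).1.1.contDiffWithinAt, hΘ₀ ▸ e.left_inv hy₀, e.mapsTo_symm, e.mapsTo,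
    fun x hx => e.right_inv hx, fun y hy => e.left_inv hy,
    htarget fun y hy => (hes hy).2.1.contDiffWithinAt, htarget fun y hy => (hes hy).2.2.1,
    htarget fun y hy => ?_⟩
  obtain ⟨⟨he, hconjy⟩, -⟩ := hes hy
  have he' : ContDiffAt ℝ ∞ e.symm (e y) :=
    hsymm.contDiffAt (e.open_target.mem_nhds (e.map_source hy))
  rw [← hconjy, map_smul, fderiv_symm_fderiv_apply e hy (he.differentiableAt (by simp))
    (he'.differentiableAt (by simp)), e.left_inv hy]

end OrbitalEquivalence

section ResonantField

variable {E : Type*} {m n : ℕ}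

/-- The monomial `ρ = ξ ^ m * η ^ n` at the point `x = (ξ, η, ζ)`. -/
def resonantMonomial (m n : ℕ) (x : ℝ × ℝ × E) : ℝ :=
  x.1 ^ m * x.2.1 ^ n

/-- The pair `(ρ, ζ)` on which the coefficients of a resonant vector field depend. -/
def resonantInvariants (m n : ℕ) (x : ℝ × ℝ × E) : ℝ × E :=
  (resonantMonomial m n x, x.2.2)

theorem resonantMonomial_zero [Zero E] (hn : n ≠ 0) :
    resonantMonomial m n (0 : ℝ × ℝ × E) = 0 := by
  simp [resonantMonomial, hn]

variable [NormedAddCommGroup E] [NormedSpace ℝ E] {μ₁ μ₂ χ : ℝ × E → ℝ} {Ψ : ℝ × E → E}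
  {π : E →L[ℝ] ℝ} {e : E} {φ : ℝ × (ℝ × E) → ℝ × E}

/-- The vector field `ξ' = ξ μ₁(ρ, ζ)`, `η' = η μ₂(ρ, ζ)`, `ζ' = ρ Ψ(ρ, ζ)`. The eigenvalues
`λ₁, λ₂` of the linear part are absorbed into `μ₁, μ₂`. -/
def resonantField (m n : ℕ) (μ₁ μ₂ : ℝ × E → ℝ) (Ψ : ℝ × E → E) (x : ℝ × ℝ × E) : ℝ × ℝ × E :=
  (x.1 * μ₁ (resonantInvariants m n x), x.2.1 * μ₂ (resonantInvariants m n x),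
    resonantMonomial m n x • Ψ (resonantInvariants m n x))

/-- The vector field `ξ' = n ξ`, `η' = -m η`, `ζ' = ρ e`. -/
def resonantNormalForm (m n : ℕ) (e : E) : ℝ × ℝ × E → ℝ × ℝ × E :=
  resonantField m n (fun _ => n) (fun _ => -m) fun _ => e

theorem contDiff_resonantMonomial : ContDiff ℝ ∞ (resonantMonomial m n : ℝ × ℝ × E → ℝ) :=
  (contDiff_fst.pow m).mul (contDiff_snd.fst.pow n)

theorem contDiff_resonantInvariants :
    ContDiff ℝ ∞ (resonantInvariants m n : ℝ × ℝ × E → ℝ × E) :=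
  contDiff_resonantMonomial.prodMk contDiff_snd.snd

theorem tendsto_resonantInvariants (hn : n ≠ 0) :
    Tendsto (resonantInvariants m n : ℝ × ℝ × E → ℝ × E) (𝓝 0) (𝓝 0) := by
  have hzero : resonantInvariants m n (0 : ℝ × ℝ × E) = 0 :=
    Prod.ext (resonantMonomial_zero hn) rfl
  simpa only [hzero] using
    (contDiff_resonantInvariants (m := m) (n := n) (E := E)).continuous.tendsto 0

theorem fderiv_resonantMonomial_apply (x : ℝ × ℝ × E) (a b : ℝ) (z : E) :
    fderiv ℝ (resonantMonomial m n) x (x.1 * a, x.2.1 * b, z) =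
      resonantMonomial m n x * (m * a + n * b) := by
  have hpow (k : ℕ) (c : ℝ) : HasDerivAt (fun s : ℝ => (1 + s * c) ^ k) (k * c) 0 := by
    have hbase : HasDerivAt (fun s : ℝ => 1 + s * c) c 0 := by
      simpa using ((hasDerivAt_id (0 : ℝ)).mul_const c).const_add 1
    simpa using hbase.fun_pow k
  have hline : HasLineDerivAt ℝ (resonantMonomial m n) (resonantMonomial m n x * (m * a + n * b))
      x (x.1 * a, x.2.1 * b, z) := by
    have hprod := ((hpow m a).mul (hpow n b)).const_mul (resonantMonomial m n x)
    refine (hprod.congr_deriv (by simp)).congr_of_eventuallyEq (.of_forall fun s => ?_)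
    change (x.1 + s * (x.1 * a)) ^ m * (x.2.1 + s * (x.2.1 * b)) ^ n =
      x.1 ^ m * x.2.1 ^ n * ((1 + s * a) ^ m * (1 + s * b) ^ n)
    rw [mul_mul_mul_comm, ← mul_pow, ← mul_pow]
    ring_nf
  rw [← (contDiff_resonantMonomial.differentiable (by simp) x).lineDeriv_eq_fderiv, hline.lineDeriv]

theorem fderiv_resonantMonomial_normalForm (x : ℝ × ℝ × E) :
    fderiv ℝ (resonantMonomial m n) x (resonantNormalForm m n e x) = 0 := by
  rw [resonantNormalForm, resonantField, fderiv_resonantMonomial_apply]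
  ring

/-- Given `π e = 1`, coordinates `(t, (r, z))` in which the flow of the normal form is rectified:
the time is `t = π ζ` up to the factor `ρ`, and `r = ρ`, `z = ζ - π ζ • e` are first integrals. -/
def flowBox (m n : ℕ) (π : E →L[ℝ] ℝ) (e : E) (y : ℝ × ℝ × E) : ℝ × (ℝ × E) :=
  (π y.2.2, (resonantMonomial m n y, y.2.2 - π y.2.2 • e))

theorem contDiff_flowBox : ContDiff ℝ ∞ (flowBox m n π e) := by
  have hπ : ContDiff ℝ ∞ fun y : ℝ × ℝ × E => π y.2.2 := by fun_prop
  exact hπ.prodMk (contDiff_resonantMonomial.prodMk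
    (contDiff_snd.snd.sub (hπ.smul contDiff_const)))

theorem flowBox_zero (hn : n ≠ 0) : flowBox m n π e 0 = 0 := by
  simp [flowBox, resonantMonomial_zero hn]

theorem tendsto_flowBox (hn : n ≠ 0) : Tendsto (flowBox m n π e) (𝓝 0) (𝓝 0) := by
  simpa only [flowBox_zero hn] using
    (contDiff_flowBox (m := m) (n := n) (π := π) (e := e)).continuous.tendsto 0

theorem fderiv_flowBox_apply (y v : ℝ × ℝ × E) :
    fderiv ℝ (flowBox m n π e) y v =
      (π v.2.2, (fderiv ℝ (resonantMonomial m n) y v, v.2.2 - π v.2.2 • e)) := by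
  let ζ : ℝ × ℝ × E →L[ℝ] E := .snd ℝ ℝ E ∘L .snd ℝ ℝ (ℝ × E)
  have hρ := (contDiff_resonantMonomial (m := m) (n := n)).differentiable (by simp) y
  exact DFunLike.congr_fun ((π ∘L ζ).hasFDerivAt.prodMk (hρ.hasFDerivAt.prodMk
    (ζ - (π ∘L ζ).smulRight e).hasFDerivAt)).fderiv v

theorem fderiv_flowBox_normalForm (hπ : π e = 1) (y : ℝ × ℝ × E) :
    fderiv ℝ (flowBox m n π e) y (resonantNormalForm m n e y) = (resonantMonomial m n y, 0) := by
  rw [fderiv_flowBox_apply, fderiv_resonantMonomial_normalForm]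
  simp [resonantNormalForm, resonantField, hπ]

/-- The change of variables `(ξ, η, ζ) ↦ (ξ, η exp a, z + b)` where `(a, b) = φ (t, (r, z))`. -/
noncomputable def straighten (m n : ℕ) (π : E →L[ℝ] ℝ) (e : E) (φ : ℝ × (ℝ × E) → ℝ × E)
    (y : ℝ × ℝ × E) : ℝ × ℝ × E :=
  (y.1, y.2.1 * Real.exp (φ (flowBox m n π e y)).1,
    (flowBox m n π e y).2.2 + (φ (flowBox m n π e y)).2)

/-- The value of `(ρ, ζ)` after `straighten`, in terms of the parameters `x.1 = (r, z)` and of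
`x.2 = (a, b)`. -/
noncomputable def straightenedInvariants (n : ℕ) (x : (ℝ × E) × (ℝ × E)) : ℝ × E :=
  (x.1.1 * Real.exp (n * x.2.1), x.1.2 + x.2.2)

theorem resonantInvariants_straighten (y : ℝ × ℝ × E) :
    resonantInvariants m n (straighten m n π e φ y) =
      straightenedInvariants n ((flowBox m n π e y).2, φ (flowBox m n π e y)) := by
  refine Prod.ext ?_ rfl
  change y.1 ^ m * (y.2.1 * Real.exp _) ^ n = y.1 ^ m * y.2.1 ^ n * Real.exp (n * _)
  rw [mul_pow, ← Real.exp_nat_mul, mul_assoc]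

theorem fderiv_straighten_apply {y : ℝ × ℝ × E} {w : ℝ × E} (v : ℝ × ℝ × E)
    (hφ : DifferentiableAt ℝ φ (flowBox m n π e y))
    (hw : fderiv ℝ φ (flowBox m n π e y) (fderiv ℝ (flowBox m n π e) y v) = w) :
    fderiv ℝ (straighten m n π e φ) y v =
      (v.1, Real.exp (φ (flowBox m n π e y)).1 * (v.2.1 + y.2.1 * w.1),
        v.2.2 - π v.2.2 • e + w.2) := by
  have hbox : HasFDerivAt (flowBox m n π e) (fderiv ℝ (flowBox m n π e) y) y :=
    (contDiff_flowBox.differentiable (by simp) y).hasFDerivAt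
  have hcomp := hφ.hasFDerivAt.comp y hbox
  have hη : HasFDerivAt (fun y : ℝ × ℝ × E => y.2.1) (.fst ℝ ℝ E ∘L .snd ℝ ℝ (ℝ × E)) y :=
    hasFDerivAt_fst.comp (f := Prod.snd) y hasFDerivAt_snd
  have hderiv : HasFDerivAt (straighten m n π e φ) _ y :=
    hasFDerivAt_fst.prodMk ((hη.mul hcomp.fst.exp).prodMk (hbox.snd.snd.add hcomp.snd))
  have hz : (fderiv ℝ (flowBox m n π e) y v).2.2 = v.2.2 - π v.2.2 • e := by
    rw [fderiv_flowBox_apply]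
  rw [hderiv.fderiv, ← hz, ← hw]
  refine Prod.ext rfl (Prod.ext ?_ rfl)
  change y.2.1 * (Real.exp (φ (flowBox m n π e y)).1 * _) +
    Real.exp (φ (flowBox m n π e y)).1 * v.2.1 = _ * (v.2.1 + y.2.1 * _)
  rw [mul_add, add_comm, mul_left_comm]
  rfl

theorem fderiv_straighten_normalForm (hπ : π e = 1) {y : ℝ × ℝ × E} {w : ℝ × E}
    (hφ : DifferentiableAt ℝ φ (flowBox m n π e y))
    (hw : ∀ s, fderiv ℝ φ (flowBox m n π e y) (s, 0) = s • w) :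
    fderiv ℝ (straighten m n π e φ) y (resonantNormalForm m n e y) =
      ((straighten m n π e φ y).1 * n,
        (straighten m n π e φ y).2.1 * (resonantMonomial m n y * w.1 - m),
        resonantMonomial m n y • w.2) := by
  rw [fderiv_straighten_apply _ hφ (by rw [fderiv_flowBox_normalForm hπ, hw])]
  refine Prod.ext rfl (Prod.ext ?_ ?_)
  · simp only [resonantNormalForm, resonantField, straighten, Prod.smul_fst, smul_eq_mul]
    ring
  · simp [resonantNormalForm, resonantField, hπ]

/-- The differential equation `(a, b)' = f ((r, z), (a, b))` whose solution `φ` makes `straighten`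
conjugate the normal form to a resonant vector field with `m μ₁ + n μ₂ = ρ χ`. -/
noncomputable def straightenODE (n : ℕ) (μ₁ χ : ℝ × E → ℝ) (Ψ : ℝ × E → E)
    (x : (ℝ × E) × (ℝ × E)) : ℝ × E :=
  (Real.exp (n * x.2.1) / μ₁ (straightenedInvariants n x)) •
    (χ (straightenedInvariants n x), (n : ℝ) • Ψ (straightenedInvariants n x))

theorem smul_fderiv_straighten_normalForm (hn : n ≠ 0) (hπ : π e = 1) {y : ℝ × ℝ × E}
    {R : ℝ × E} (hR : resonantInvariants m n (straighten m n π e φ y) = R) (hμ₁ : μ₁ R ≠ 0)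
    (hχ : m * μ₁ R + n * μ₂ R = R.1 * χ R) (hφ : DifferentiableAt ℝ φ (flowBox m n π e y))
    (hφ' : ∀ s, fderiv ℝ φ (flowBox m n π e y) (s, 0) =
      s • straightenODE n μ₁ χ Ψ ((flowBox m n π e y).2, φ (flowBox m n π e y))) :
    (μ₁ R / n) • fderiv ℝ (straighten m n π e φ) y (resonantNormalForm m n e y) =
      resonantField m n μ₁ μ₂ Ψ (straighten m n π e φ y) := by
  have hn' : (n : ℝ) ≠ 0 := Nat.cast_ne_zero.2 hn
  have hR' := (resonantInvariants_straighten y).symm.trans hR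
  have hρ : R.1 = resonantMonomial m n y * Real.exp (n * (φ (flowBox m n π e y)).1) :=
    congrArg Prod.fst hR'.symm
  have hρ' : resonantMonomial m n (straighten m n π e φ y) = R.1 := congrArg Prod.fst hR
  rw [fderiv_straighten_normalForm hπ hφ hφ', resonantField, hρ', hR, straightenODE, hR']
  rw [hρ] at hχ ⊢
  refine Prod.ext ?_ (Prod.ext ?_ ?_)
  · change μ₁ R / n * (_ * n) = _ * μ₁ R
    field_simp
  · change μ₁ R / n * (_ * (_ * (_ / μ₁ R * χ R) - m)) = _ * μ₂ R
    field_simp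
    linear_combination -(straighten m n π e φ y).2.1 * hχ
  · simp only [Prod.smul_snd, smul_smul]
    congr 1
    field_simp

theorem eventually_contDiffAt_straightenODE (hμ₁ : ∀ᶠ R in 𝓝 0, ContDiffAt ℝ ∞ μ₁ R)
    (hχ : ContDiff ℝ ∞ χ) (hΨ : ∀ᶠ R in 𝓝 0, ContDiffAt ℝ ∞ Ψ R) (hμ₁0 : μ₁ 0 ≠ 0) :
    ∀ᶠ x in 𝓝 0, ContDiffAt ℝ ∞ (straightenODE n μ₁ χ Ψ) x := by
  have hexp : ContDiff ℝ ∞ fun x : (ℝ × E) × (ℝ × E) => Real.exp (n * x.2.1) := by fun_prop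
  have hQ : ContDiff ℝ ∞ (straightenedInvariants n : (ℝ × E) × (ℝ × E) → ℝ × E) :=
    (contDiff_fst.fst.mul hexp).prodMk (contDiff_fst.snd.add contDiff_snd.snd)
  have hQ₀ : Tendsto (straightenedInvariants n : (ℝ × E) × (ℝ × E) → ℝ × E) (𝓝 0) (𝓝 0) := by
    simpa [straightenedInvariants, ← Prod.zero_eq_mk] using hQ.continuous.tendsto 0
  have hμ₁_ne : ∀ᶠ R in 𝓝 0, μ₁ R ≠ 0 := hμ₁.self_of_nhds.continuousAt.eventually_ne hμ₁0
  filter_upwards [hQ₀.eventually hμ₁, hQ₀.eventually hΨ, hQ₀.eventually hμ₁_ne] with x hμ hψ hne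
  exact (hexp.contDiffAt.div (hμ.comp x hQ.contDiffAt) hne).smul
    ((hχ.contDiffAt.comp x hQ.contDiffAt).prodMk
      (contDiffAt_const.smul (hψ.comp x hQ.contDiffAt)))

theorem straighten_zero (hφ : φ 0 = 0) (hn : n ≠ 0) : straighten m n π e φ 0 = 0 := by
  simp [straighten, flowBox_zero hn, hφ]

theorem eventually_contDiffAt_straighten (hn : n ≠ 0) (hφ : ∀ᶠ q in 𝓝 0, ContDiffAt ℝ ∞ φ q) :
    ∀ᶠ y in 𝓝 0, ContDiffAt ℝ ∞ (straighten m n π e φ) y := by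
  filter_upwards [(tendsto_flowBox hn).eventually hφ] with y hy
  have hbox : ContDiffAt ℝ ∞ (flowBox m n π e) y := contDiff_flowBox.contDiffAt
  have hcomp := hy.comp y hbox
  exact contDiffAt_fst.prodMk ((contDiffAt_snd.fst.mul hcomp.fst.exp).prodMk
    (hbox.snd.snd.add hcomp.snd))

theorem isInvertible_fderiv_straighten [FiniteDimensional ℝ E] (hn : n ≠ 0) (hπ : π e = 1)
    {f : (ℝ × E) × (ℝ × E) → ℝ × E} (hφ : IsSmoothLocalSolution f φ) (hf : π (f 0).2 ≠ 0) :
    (fderiv ℝ (straighten m n π e φ) 0).IsInvertible := by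
  have hbox₀ : flowBox m n π e 0 = 0 := flowBox_zero hn
  have hformula (v : ℝ × ℝ × E) : fderiv ℝ (straighten m n π e φ) 0 v =
      (v.1, v.2.1, v.2.2 - π v.2.2 • e + π v.2.2 • (f 0).2) := by
    have hφ₀ := hφ.contDiffAt.self_of_nhds.differentiableAt (by simp)
    rw [← hbox₀] at hφ₀
    rw [fderiv_straighten_apply v hφ₀ rfl, hbox₀, hφ.map_zero, hφ.fderiv_zero_apply,
      fderiv_flowBox_apply]
    simp
  have hinj : Function.Injective (fderiv ℝ (straighten m n π e φ) 0) := by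
    refine (injective_iff_map_eq_zero _).2 fun v hv => ?_
    rw [hformula, Prod.mk_eq_zero, Prod.mk_eq_zero] at hv
    obtain ⟨hξ, hη, hζ⟩ := hv
    have hπζ : π v.2.2 = 0 := by simpa [hπ, hf] using congrArg π hζ
    rw [hπζ, zero_smul, zero_smul, sub_zero, add_zero] at hζ
    exact Prod.ext hξ (Prod.ext hη hζ)
  exact ⟨(LinearEquiv.ofInjectiveEndo _ hinj).toContinuousLinearEquiv, rfl⟩

theorem eventually_smul_fderiv_straighten_normalForm (hn : n ≠ 0) (hπ : π e = 1)
    (hφ : IsSmoothLocalSolution (straightenODE n μ₁ χ Ψ) φ) (hμ₁ : ∀ᶠ R in 𝓝 0, μ₁ R ≠ 0)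
    (hχ : ∀ᶠ R in 𝓝 0, m * μ₁ R + n * μ₂ R = R.1 * χ R) :
    ∀ᶠ y in 𝓝 0, (μ₁ (resonantInvariants m n (straighten m n π e φ y)) / n) •
        fderiv ℝ (straighten m n π e φ) y (resonantNormalForm m n e y) =
      resonantField m n μ₁ μ₂ Ψ (straighten m n π e φ y) := by
  have hstraighten : Tendsto (straighten m n π e φ) (𝓝 0) (𝓝 0) := by
    simpa only [straighten_zero hφ.map_zero hn] using
      (eventually_contDiffAt_straighten hn hφ.contDiffAt).self_of_nhds.continuousAt.tendsto
  have hinv := (tendsto_resonantInvariants (m := m) hn).comp hstraighten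
  have hbox : Tendsto (flowBox m n π e) (𝓝 0) (𝓝 0) := tendsto_flowBox hn
  filter_upwards [hinv.eventually (hμ₁.and hχ),
    hbox.eventually (hφ.contDiffAt.and hφ.eventually_fderiv_apply)] with y ⟨hμ₁y, hχy⟩ ⟨hφy, hφ'y⟩
  exact smul_fderiv_straighten_normalForm hn hπ rfl hμ₁y hχy (hφy.differentiableAt (by simp)) hφ'y

theorem stmt12_general [FiniteDimensional ℝ E] (m n : ℕ) (hn : n ≠ 0) {N : Set (ℝ × E)}
    (hN : N ∈ 𝓝 0) (μ₁ μ₂ : ℝ × E → ℝ) (Ψ : ℝ × E → E) (hμ₁ : ContDiffOn ℝ ∞ μ₁ N)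
    (hμ₂ : ContDiffOn ℝ ∞ μ₂ N) (hΨ : ContDiffOn ℝ ∞ Ψ N) (hμ₁0 : μ₁ 0 ≠ 0) (hΨ0 : Ψ 0 ≠ 0)
    (hflat : ∀ᶠ ζ in 𝓝 (0 : E), m * μ₁ (0, ζ) + n * μ₂ (0, ζ) = 0) (e : E) (he : e ≠ 0) :
    OrbEquiv Set.univ (resonantField m n μ₁ μ₂ Ψ) (resonantNormalForm m n e) 0 0 := by
  have hμ₁_smooth := eventually_contDiffAt_of_contDiffOn hμ₁ hN
  have hμ_smooth := eventually_contDiffAt_of_contDiffOn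
    ((contDiffOn_const (c := (m : ℝ)).mul hμ₁).add (contDiffOn_const (c := (n : ℝ)).mul hμ₂)) hN
  have hμ₁_ne := hμ₁_smooth.self_of_nhds.continuousAt.eventually_ne hμ₁0
  obtain ⟨π, hπ, hπΨ⟩ := SeparatingDual.exists_eq_one_ne_zero_of_ne_zero_pair (R := ℝ) he hΨ0
  obtain ⟨χ, hχ, hμχ⟩ := exists_contDiff_eventually_eq_smul hμ_smooth hflat
  obtain ⟨φ, hφ⟩ := exists_isSmoothLocalSolution (eventually_contDiffAt_straightenODE (n := n)
    hμ₁_smooth hχ (eventually_contDiffAt_of_contDiffOn hΨ hN) hμ₁0)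
  have hπf : π (straightenODE n μ₁ χ Ψ 0).2 ≠ 0 := by
    simp [straightenODE, straightenedInvariants, ← Prod.zero_eq_mk, hn, hμ₁0, hπΨ]
  refine OrbEquiv.of_smul_fderiv_eq univ_mem (straighten_zero hφ.map_zero hn)
    (eventually_contDiffAt_straighten hn hφ.contDiffAt)
    (isInvertible_fderiv_straighten hn hπ hφ hπf)
    (h := fun x => μ₁ (resonantInvariants m n x) / n) ?_ ?_
    (eventually_smul_fderiv_straighten_normalForm hn hπ hφ hμ₁_ne hμχ)
  · filter_upwards [(tendsto_resonantInvariants hn).eventually hμ₁_smooth] with x hx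
    exact (hx.comp x contDiff_resonantInvariants.contDiffAt).div_const _
  · exact div_ne_zero ((tendsto_resonantInvariants hn).eventually hμ₁_ne).self_of_nhds
      (Nat.cast_ne_zero.2 hn)

theorem resonantNormalForm_piSingle {ι : Type*} [Fintype ι] [DecidableEq ι] (m n : ℕ) (i : ι) :
    resonantNormalForm m n (Pi.single i (1 : ℝ)) = fun x : ℝ × ℝ × (ι → ℝ) =>
      ((n : ℝ) * x.1, -(m : ℝ) * x.2.1, fun j => if j = i then x.1 ^ m * x.2.1 ^ n else 0) := by
  funext x
  refine Prod.ext (mul_comm _ _) (Prod.ext (mul_comm _ _) (funext fun j => ?_))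
  simp [resonantNormalForm, resonantField, resonantMonomial, Pi.single_apply]

end ResonantField

/-- If moreover `Φ(0,ζ) ≡ 0` near `0` (and `Ψ₁(0,0) ≠ 0`), the germ of `V` at `0` is
`C^∞`-smoothly orbitally equivalent to `ξ̇ = n·ξ, η̇ = −m·η, ζ̇₁ = ξ^m η^n, ζ̇ᵢ = 0`. -/
theorem stmt12 (l : ℕ) (hl : 0 < l) (n m : ℕ) (hn : 0 < n) (hm : 0 < m)
    (hcop : Nat.Coprime m n)
    (lam₁ lam₂ : ℝ) (hlam₁ : lam₁ ≠ 0) (hresonance : (m : ℝ) * lam₁ + (n : ℝ) * lam₂ = 0)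
    (N₀ : Set (ℝ × (Fin l → ℝ))) (hN₀ : IsOpen N₀) (hN₀0 : (0 : ℝ × (Fin l → ℝ)) ∈ N₀)
    (Φ₁ Φ₂ : (ℝ × (Fin l → ℝ)) → ℝ) (Ψ : Fin l → (ℝ × (Fin l → ℝ)) → ℝ)
    (hΦ₁ : ContDiffOn ℝ (⊤ : ℕ∞) Φ₁ N₀) (hΦ₂ : ContDiffOn ℝ (⊤ : ℕ∞) Φ₂ N₀)
    (hΨ : ∀ i, ContDiffOn ℝ (⊤ : ℕ∞) (Ψ i) N₀)
    (hΦ₁0 : Φ₁ 0 = 0) (hΦ₂0 : Φ₂ 0 = 0)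
    (hΨ₁ : Ψ ⟨0, hl⟩ 0 ≠ 0)
    (Φ : (ℝ × (Fin l → ℝ)) → ℝ) (hΦ : Φ = fun p => (m : ℝ) * Φ₁ p + (n : ℝ) * Φ₂ p)
    (ρ : (ℝ × ℝ × (Fin l → ℝ)) → ℝ) (hρ : ρ = fun x => x.1 ^ m * x.2.1 ^ n)
    (V : (ℝ × ℝ × (Fin l → ℝ)) → (ℝ × ℝ × (Fin l → ℝ)))
    (hV : V = fun x => (x.1 * (lam₁ + Φ₁ (ρ x, x.2.2)), x.2.1 * (lam₂ + Φ₂ (ρ x, x.2.2)),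
      fun i => ρ x * Ψ i (ρ x, x.2.2)))
    -- Φ(0, ζ) = 0 for all ζ in a neighborhood of 0
    (Z : Set (Fin l → ℝ)) (hZ : IsOpen Z) (hZ0 : (0 : Fin l → ℝ) ∈ Z)
    (hΦflat : ∀ ζ ∈ Z, Φ ((0 : ℝ), ζ) = 0) :
    OrbEquiv Set.univ V
      (fun x : ℝ × ℝ × (Fin l → ℝ) =>
        ((n : ℝ) * x.1, -(m : ℝ) * x.2.1,
          fun i : Fin l => if i = (⟨0, hl⟩ : Fin l) then x.1 ^ m * x.2.1 ^ n else 0)) 0 0 := by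
  subst hV hρ hΦ
  have hμ₁0 : lam₁ + Φ₁ 0 ≠ 0 := by rwa [hΦ₁0, add_zero]
  have hΨ0 : (fun i => Ψ i 0) ≠ 0 := fun h => hΨ₁ (congrFun h ⟨0, hl⟩)
  have hflat : ∀ᶠ ζ in 𝓝 (0 : Fin l → ℝ),
      m * (lam₁ + Φ₁ (0, ζ)) + n * (lam₂ + Φ₂ (0, ζ)) = 0 :=
    (hZ.eventually_mem hZ0).mono fun ζ hζ => by linear_combination hresonance + hΦflat ζ hζ
  rw [← resonantNormalForm_piSingle]
  exact stmt12_general m n hn.ne' (hN₀.mem_nhds hN₀0) (fun R => lam₁ + Φ₁ R)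
    (fun R => lam₂ + Φ₂ R) (fun R i => Ψ i R) (contDiffOn_const.add hΦ₁)
    (contDiffOn_const.add hΦ₂) (contDiffOn_pi.2 hΨ) hμ₁0 hΨ0 hflat _
    (Pi.single_ne_zero_iff.2 one_ne_zero)
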